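/- arXiv:1709.06522 — 4 statements merged into one kernel-verified Lean document; each statement's English description precedes it below -/
import Mathlib

section
/- The functions h_m, m ∈ ℕ₀, have the following properties: (1) h_m' = h_{m−1} for m ≥ 1; (2) h₀(t) = 2 − e^{−t} ≥ 1 and h₁(t) = e^{−t} + 2t ≥ 1 for t ≥ 0; (3) h_m(0) = 1 for all m ≥ 0; (4) h_m is strictly increasing on [0,∞) and h_m ≥ 1 for all m ≥ 0; (5) h_m is convex for m ≥ 1; (6) 0 ≤ h_m(t) − (1 + t/1! + t²/2! + … + t^m/m!) ≤ t^m/m! for all t ≥ 0 and m ∈ ℕ₀. -/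
open Real MeasureTheory Filter
open scoped RealInnerProductSpace ENNReal NNReal Topology

noncomputable section

/-- The ambient Euclidean space `ℝ^{d+1}`. -/
abbrev Esp (d : ℕ) : Type := EuclideanSpace ℝ (Fin (d + 1))

/-- The unit sphere `S^d ⊂ ℝ^{d+1}`. -/
def uSphere (d : ℕ) : Set (Esp d) := Metric.sphere 0 1

/-- The spherical Lebesgue measure `σ_d` (d-dimensional Hausdorff measure restricted
to the unit sphere). -/
def sigmaMeas (d : ℕ) : Measure (Esp d) := (μH[(d : ℝ)]).restrict (uSphere d)

/-- `ω_{d+1} = σ_d(S^d)`, the total surface area of the unit sphere in `ℝ^{d+1}`. -/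
def omegaTot (d : ℕ) : ℝ := (sigmaMeas d (uSphere d)).toReal

/-- `ω_d`, the `(d-1)`-dimensional measure of the unit sphere `S^{d-1} ⊂ ℝ^d`. -/
def omegaSm (d : ℕ) : ℝ :=
  (μH[((d : ℝ) - 1)] (Metric.sphere (0 : EuclideanSpace ℝ (Fin d)) 1)).toReal

/-- `κ_d`, the volume of the unit ball in `ℝ^d`. -/
def kappaVol (d : ℕ) : ℝ :=
  (volume (Metric.ball (0 : EuclideanSpace ℝ (Fin d)) 1)).toReal

/-- The geodesic (angular) distance `d_s(x,y) = arccos ⟨x,y⟩` on the unit sphere. -/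
def geo {d : ℕ} (x y : Esp d) : ℝ := Real.arccos ⟪x, y⟫

/-- The spherical ball (cap) `B(e,α)` of radius `α` centred at `e`. -/
def cap {d : ℕ} (e : Esp d) (α : ℝ) : Set (Esp d) := {x ∈ uSphere d | geo x e ≤ α}

/-- `K ∈ 𝒦̄_s^d`: a spherically convex body, i.e. the intersection of the unit sphere
with a closed convex cone `C ≠ {0}` which is not a linear subspace. -/
def IsSphConvBody (d : ℕ) (K : Set (Esp d)) : Prop :=
  ∃ C : Set (Esp d), IsClosed C ∧ Convex ℝ C ∧
    (∀ x ∈ C, ∀ t : ℝ, 0 ≤ t → t • x ∈ C) ∧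
    C ≠ {0} ∧ (∀ L : Submodule ℝ (Esp d), C ≠ (L : Set (Esp d))) ∧
    K = C ∩ uSphere d

/-- `K ∈ 𝒦_s^d`: a proper spherically convex body, i.e. the intersection of the unit
sphere with a line-free closed convex cone `C ≠ {0}`. -/
def IsProperSphConvBody (d : ℕ) (K : Set (Esp d)) : Prop :=
  ∃ C : Set (Esp d), IsClosed C ∧ Convex ℝ C ∧
    (∀ x ∈ C, ∀ t : ℝ, 0 ≤ t → t • x ∈ C) ∧
    C ≠ {0} ∧ (∀ x ∈ C, x ≠ 0 → -x ∉ C) ∧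
    K = C ∩ uSphere d

/-- The spherical mean width functional
`U₁(K) = (1/(2 ω_{d+1})) σ_d({x ∈ S^d : x^⊥ ∩ K ≠ ∅})`. -/
def U1 (d : ℕ) (K : Set (Esp d)) : ℝ :=
  (1 / (2 * omegaTot d)) * (sigmaMeas d {x | ∃ y ∈ K, ⟪x, y⟫ = 0}).toReal

/-- `D(x) = ∫₀^x sin^{d-1} t dt`. -/
def Dfun (d : ℕ) (x : ℝ) : ℝ := ∫ t in (0:ℝ)..x, Real.sin t ^ (d - 1)

/-- `S_e = S^d ∩ e^⊥`, the great subsphere orthogonal to `e`. -/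
def equator {d : ℕ} (e : Esp d) : Set (Esp d) := uSphere d ∩ {x | ⟪x, e⟫ = 0}

/-- The rotation invariant probability measure `σ⁰_{d-1}` on the great subsphere `S_e`. -/
def sigma0 (d : ℕ) (e : Esp d) : Measure (Esp d) :=
  (μH[((d : ℝ) - 1)] (equator e))⁻¹ • (μH[((d : ℝ) - 1)]).restrict (equator e)

/-- The spherical radial function `α_{K,e}(u)`: the geodesic distance from `e` to the
boundary of `K` along the great circle through `e` in direction `u ∈ S_e`. -/
def sphRadial {d : ℕ} (K : Set (Esp d)) (e u : Esp d) : ℝ :=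
  sSup {t : ℝ | 0 ≤ t ∧ t ≤ π / 2 ∧ (Real.cos t) • e + (Real.sin t) • u ∈ K}

/-- The set `-int(K*)`: points `e` of the sphere such that `K` is contained in the
open hemisphere centred at `e`. -/
def negIntPolar (d : ℕ) (K : Set (Esp d)) : Set (Esp d) :=
  {e ∈ uSphere d | ∀ x ∈ K, 0 < ⟪e, x⟫}

/-- Points `e` of the sphere such that `K ⊆ {x : ⟨x,e⟩ ≥ 0}` (closed hemisphere). -/
def hemiCenters (d : ℕ) (K : Set (Esp d)) : Set (Esp d) :=
  {e ∈ uSphere d | ∀ x ∈ K, 0 ≤ ⟪x, e⟫}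

/-- The `σ⁰_{d-1}`-average of `D ∘ α_{K,e}` over `S_e`. -/
def avgD (d : ℕ) (K : Set (Esp d)) (e : Esp d) : ℝ :=
  ∫ u, Dfun d (sphRadial K e u) ∂(sigma0 d e)

/-- The `L²(S_e, σ⁰_{d-1})`-deviation of `D ∘ α_{K,e}` from its average. -/
def L2dev (d : ℕ) (K : Set (Esp d)) (e : Esp d) : ℝ :=
  Real.sqrt (∫ u, (Dfun d (sphRadial K e u) - avgD d K e) ^ 2 ∂(sigma0 d e))

/-- `Δ₂(K)`: infimum of the `L²` deviations over `e ∈ -int(K*)`. -/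
def Delta2 (d : ℕ) (K : Set (Esp d)) : ℝ :=
  sInf (L2dev d K '' negIntPolar d K)

/-- `Δ₂*(K)`: infimum of the `L²` deviations over all `e` with
`K ⊆ {x : ⟨x,e⟩ ≥ 0}`. -/
def Delta2Star (d : ℕ) (K : Set (Esp d)) : ℝ :=
  sInf (L2dev d K '' hemiCenters d K)

/-- The centred spherical inradius `r_e(K) = max{r ≥ 0 : B(e,r) ⊆ K}`. -/
def rcent (d : ℕ) (K : Set (Esp d)) (e : Esp d) : ℝ :=
  sSup {r : ℝ | 0 ≤ r ∧ cap e r ⊆ K}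

/-- The centred spherical circumradius `R_e(K) = min{r ≥ 0 : K ⊆ B(e,r)}`. -/
def Rcent (d : ℕ) (K : Set (Esp d)) (e : Esp d) : ℝ :=
  sInf {r : ℝ | 0 ≤ r ∧ K ⊆ cap e r}

/-- The spherical inradius `Σ_r(K) = max{r_e(K) : e ∈ K}`. -/
def SigmaR (d : ℕ) (K : Set (Esp d)) : ℝ :=
  sSup (rcent d K '' K)

/-- The deviation functional `ϑ_r(K) = min{R_e(K) - r_e(K) : e ∈ K, r_e(K) = Σ_r(K)}`. -/
def thetaR (d : ℕ) (K : Set (Esp d)) : ℝ :=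
  sInf ((fun e => Rcent d K e - rcent d K e) '' {e ∈ K | rcent d K e = SigmaR d K})

/-- `Ũ_e(K) = σ_d({x ∈ S^d : (x-e)^⊥ ∩ K ≠ ∅})`. -/
def Utilde (d : ℕ) (e : Esp d) (K : Set (Esp d)) : ℝ :=
  (sigmaMeas d {x | ∃ y ∈ K, ⟪x - e, y⟫ = 0}).toReal

/-- The spherical Hausdorff distance `δ_s`, based on the geodesic metric. -/
def sphHausdorff (d : ℕ) (K L : Set (Esp d)) : ℝ :=
  max (⨆ x ∈ K, ⨅ y ∈ L, geo x y) (⨆ y ∈ L, ⨅ x ∈ K, geo x y)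

/-- Continuity of a functional on `𝒦̄_s^d` with respect to the spherical Hausdorff
metric `δ_s`. -/
def SphContinuous (d : ℕ) (F : Set (Esp d) → ℝ) : Prop :=
  ∀ K, IsSphConvBody d K → ∀ ε > (0:ℝ), ∃ δ > (0:ℝ), ∀ L, IsSphConvBody d L →
    sphHausdorff d K L < δ → |F K - F L| < ε

/-- A hitting functional: continuous, nonnegative, vanishing exactly on one-pointed
sets. -/
def IsHittingFunctional (d : ℕ) (Φ : Set (Esp d) → ℝ) : Prop :=
  SphContinuous d Φ ∧ (∀ K, IsSphConvBody d K → 0 ≤ Φ K) ∧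
    (∀ K, IsSphConvBody d K → (Φ K = 0 ↔ ∃ p, K = {p}))

/-- A size functional: continuous, nonnegative, not identically zero, vanishing on
one-pointed sets. -/
def IsSizeFunctional (d : ℕ) (S : Set (Esp d) → ℝ) : Prop :=
  SphContinuous d S ∧ (∀ K, IsSphConvBody d K → 0 ≤ S K) ∧
    (∃ K, IsSphConvBody d K ∧ S K ≠ 0) ∧
    (∀ p ∈ uSphere d, S ({p} : Set (Esp d)) = 0)

/-- The isoperimetric constant `τ(Φ,Σ,a) = inf{Φ(K) : K ∈ 𝒦̄_s^d, Σ(K) ≥ a}`. -/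
def tauConst (d : ℕ) (Φ S : Set (Esp d) → ℝ) (a : ℝ) : ℝ :=
  sInf (Φ '' {K | IsSphConvBody d K ∧ a ≤ S K})

/-- The spherical convex hull of a set `V ⊆ S^d`: the intersection of the sphere with
the closed convex cone generated by `V`. -/
def sphConvHull (d : ℕ) (V : Set (Esp d)) : Set (Esp d) :=
  {x ∈ uSphere d | ∃ y ∈ convexHull ℝ V, ∃ t : ℝ, 0 < t ∧ x = t • y}

/-- A spherical polytope: the intersection of the sphere with a finitely generated
(polyhedral) cone, which is also a spherically convex body. -/
def IsSphPolytope (d : ℕ) (P : Set (Esp d)) : Prop :=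
  IsSphConvBody d P ∧ ∃ V : Finset (Esp d),
    (V : Set (Esp d)) ⊆ uSphere d ∧ P = sphConvHull d (V : Set (Esp d))

/-- The vertices (extreme points) of a spherical polytope. -/
def sphExtremePoints (d : ℕ) (P : Set (Esp d)) : Set (Esp d) :=
  {x ∈ P | x ∉ sphConvHull d (P \ {x})}

/-- The boundary of `K` relative to the sphere. -/
def sphFrontier (d : ℕ) (K : Set (Esp d)) : Set (Esp d) :=
  {x ∈ K | ∀ ε > (0:ℝ), ∃ y ∈ uSphere d, y ∉ K ∧ dist y x < ε}

/-- The functions `h_m(t) = (-1)^{m+1} e^{-t} + 2 ∑_{i=0}^{⌊m/2⌋} t^{m-2i}/(m-2i)!`. -/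
def hFun (m : ℕ) (t : ℝ) : ℝ :=
  (-1 : ℝ) ^ (m + 1) * Real.exp (-t) +
    2 * ∑ i ∈ Finset.range (m / 2 + 1), t ^ (m - 2 * i) / (Nat.factorial (m - 2 * i) : ℝ)

/-!
Let `S_n` be the sum of the first `n` terms of the exponential series, and let
`E_n(t) = (-1)^n (e^{-t} - S_n(-t))` be the signed remainder of that series at `-t`. Adding
`S_{m+1}(t)` and `(-1)^m S_{m+1}(-t)` doubles the terms of the parity of `m` and cancels the
others, so `h_m(t) = S_{m+1}(t) + E_{m+1}(t)`. Both families satisfy `f_{n+1}' = f_n`, and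
`E_0 = e^{-t}` is positive, so integrating from `0` gives `E_n ≥ 0` on `[0, ∞)` for all `n`; since
`E_n(t) + E_{n+1}(t) = t^n / n!`, also `E_{n+1}(t) ≤ t^n / n!`. Monotonicity and convexity follow
because `h_m' = S_m + E_m` is positive on `[0, ∞)`.
-/

open Finset in
theorem sum_range_one_add_neg_one_pow_mul {R : Type*} [Ring R] (a : ℕ → R) (m : ℕ) :
    ∑ i ∈ range (m + 1), (1 + (-1) ^ (m + i)) * a i =
      2 * ∑ i ∈ range (m / 2 + 1), a (m - 2 * i) := by
  induction m using Nat.twoStepInduction with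
  | zero => simp [one_add_one_eq_two]
  | one => norm_num [sum_range_succ, one_add_one_eq_two]
  | more m ih _ =>
    have even_shift (i : ℕ) : (-1 : R) ^ (m + 2 + i) = (-1) ^ (m + i) := by
      rw [add_right_comm, pow_add, neg_one_sq, mul_one]
    have odd_term : (-1 : R) ^ (m + (m + 1)) = -1 := Odd.neg_one_pow ⟨m, by ring⟩
    have even_term : (-1 : R) ^ (m + (m + 2)) = 1 := Even.neg_one_pow ⟨m + 1, by ring⟩
    have reindex (i : ℕ) : m + 2 - 2 * (i + 1) = m - 2 * i := by lia
    have half : (m + 2) / 2 = m / 2 + 1 := by lia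
    simp only [sum_range_succ _ (m + 2), sum_range_succ _ (m + 1), even_shift, odd_term,
      even_term, ih, half, sum_range_succ' _ (m / 2 + 1), reindex, mul_zero, Nat.sub_zero,
      add_neg_cancel, zero_mul, add_zero, one_add_one_eq_two]
    rw [mul_add]

/-- The sum `∑_{i < n} x^i / i!` of the first `n` terms of the exponential series. The index counts
terms, so `expPartialSum (m + 1)` is the Taylor polynomial of degree `m`. In characteristic `p > 0`
the terms with `p ≤ i` are `0` by the convention `x / 0 = 0`. -/
def expPartialSum {K : Type*} [DivisionRing K] (n : ℕ) (x : K) : K :=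
  ∑ i ∈ Finset.range n, x ^ i / (Nat.factorial i : K)

theorem expPartialSum_zero {K : Type*} [DivisionRing K] (x : K) : expPartialSum 0 x = 0 :=
  Finset.sum_range_zero _

theorem expPartialSum_succ {K : Type*} [DivisionRing K] (n : ℕ) (x : K) :
    expPartialSum (n + 1) x = expPartialSum n x + x ^ n / (Nat.factorial n : K) :=
  Finset.sum_range_succ _ n

theorem expPartialSum_succ_apply_zero {K : Type*} [DivisionRing K] (n : ℕ) :
    expPartialSum (n + 1) (0 : K) = 1 := by
  simp [expPartialSum, Finset.sum_range_succ']

theorem one_le_expPartialSum_succ {K : Type*} [Field K] [LinearOrder K] [IsStrictOrderedRing K]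
    (n : ℕ) {x : K} (hx : 0 ≤ x) : 1 ≤ expPartialSum (n + 1) x := by
  have first_term_le := Finset.single_le_sum (f := fun i => x ^ i / (Nat.factorial i : K))
    (fun i _ => by positivity) (Finset.mem_range.mpr n.succ_pos)
  simpa only [expPartialSum, pow_zero, Nat.factorial_zero, Nat.cast_one, div_one] using
    first_term_le

theorem hasDerivAt_pow_succ_div_factorial {𝕜 : Type*} [NontriviallyNormedField 𝕜] [CharZero 𝕜]
    (n : ℕ) (x : 𝕜) :
    HasDerivAt (fun y : 𝕜 => y ^ (n + 1) / (Nat.factorial (n + 1) : 𝕜))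
      (x ^ n / (Nat.factorial n : 𝕜)) x := by
  refine ((hasDerivAt_pow (n + 1) x).div_const _).congr_deriv ?_
  rw [Nat.factorial_succ, Nat.cast_mul, Nat.add_sub_cancel,
    mul_div_mul_left _ _ (Nat.cast_ne_zero.mpr n.succ_ne_zero)]

theorem hasDerivAt_expPartialSum_succ {𝕜 : Type*} [NontriviallyNormedField 𝕜] [CharZero 𝕜]
    (n : ℕ) (x : 𝕜) : HasDerivAt (expPartialSum (n + 1)) (expPartialSum n x) x := by
  induction n with
  | zero =>
    have const_one : expPartialSum (0 + 1) = fun _ : 𝕜 => (1 : 𝕜) := by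
      funext y
      simp [expPartialSum]
    rw [const_one, expPartialSum_zero]
    exact hasDerivAt_const x 1
  | succ n ih =>
    rw [funext (expPartialSum_succ (K := 𝕜) (n + 1)), expPartialSum_succ n]
    exact ih.add (hasDerivAt_pow_succ_div_factorial n x)

/-- The remainder of the alternating series of `e^{-t}` after `n` terms, with the sign `(-1)^n` of
the first omitted term, which makes it nonnegative for `t ≥ 0`. -/
def expNegRemainder (n : ℕ) (t : ℝ) : ℝ :=
  (-1) ^ n * (Real.exp (-t) - expPartialSum n (-t))

theorem expNegRemainder_zero (t : ℝ) : expNegRemainder 0 t = Real.exp (-t) := by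
  simp [expNegRemainder, expPartialSum_zero]

theorem expNegRemainder_succ_apply_zero (n : ℕ) : expNegRemainder (n + 1) 0 = 0 := by
  simp [expNegRemainder, expPartialSum_succ_apply_zero]

theorem expNegRemainder_add_succ (n : ℕ) (t : ℝ) :
    expNegRemainder n t + expNegRemainder (n + 1) t = t ^ n / (Nat.factorial n : ℝ) := by
  have sign_cancel : (-1 : ℝ) ^ n * (-t) ^ n = t ^ n := by rw [← mul_pow, neg_one_mul, neg_neg]
  simp only [expNegRemainder, expPartialSum_succ, pow_succ]
  linear_combination sign_cancel / (Nat.factorial n : ℝ)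

theorem hasDerivAt_expNegRemainder_succ (n : ℕ) (t : ℝ) :
    HasDerivAt (expNegRemainder (n + 1)) (expNegRemainder n t) t := by
  have remainder_deriv :=
    (Real.hasDerivAt_exp (-t)).sub (hasDerivAt_expPartialSum_succ n (-t))
  refine ((remainder_deriv.comp t (hasDerivAt_neg t)).const_mul ((-1) ^ (n + 1))).congr_deriv ?_
  rw [expNegRemainder]
  ring

theorem expNegRemainder_nonneg (n : ℕ) {t : ℝ} (ht : 0 ≤ t) : 0 ≤ expNegRemainder n t := by
  induction n generalizing t with
  | zero => exact expNegRemainder_zero t ▸ Real.exp_nonneg (-t)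
  | succ n ih =>
    have mono : MonotoneOn (expNegRemainder (n + 1)) (Set.Ici 0) :=
      monotoneOn_of_hasDerivWithinAt_nonneg (convex_Ici 0)
        (fun s _ => (hasDerivAt_expNegRemainder_succ n s).continuousAt.continuousWithinAt)
        (fun s _ => (hasDerivAt_expNegRemainder_succ n s).hasDerivWithinAt)
        (fun s hs => ih (interior_subset hs))
    exact expNegRemainder_succ_apply_zero n ▸ mono Set.self_mem_Ici ht ht

theorem expNegRemainder_succ_le (n : ℕ) {t : ℝ} (ht : 0 ≤ t) :
    expNegRemainder (n + 1) t ≤ t ^ n / (Nat.factorial n : ℝ) :=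
  expNegRemainder_add_succ n t ▸ le_add_of_nonneg_left (expNegRemainder_nonneg n ht)

theorem expPartialSum_add_expNegRemainder_pos (n : ℕ) {t : ℝ} (ht : 0 ≤ t) :
    0 < expPartialSum n t + expNegRemainder n t := by
  cases n with
  | zero =>
    rw [expPartialSum_zero, expNegRemainder_zero, zero_add]
    exact Real.exp_pos (-t)
  | succ n =>
    exact add_pos_of_pos_of_nonneg (zero_lt_one.trans_le (one_le_expPartialSum_succ n ht))
      (expNegRemainder_nonneg (n + 1) ht)

theorem hFun_eq_expPartialSum_add_expNegRemainder (m : ℕ) (t : ℝ) :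
    hFun m t = expPartialSum (m + 1) t + expNegRemainder (m + 1) t := by
  have parity_sum :
      expPartialSum (m + 1) t + (-1) ^ m * expPartialSum (m + 1) (-t) =
        2 * ∑ i ∈ Finset.range (m / 2 + 1), t ^ (m - 2 * i) / (Nat.factorial (m - 2 * i) : ℝ) := by
    rw [← sum_range_one_add_neg_one_pow_mul (fun i => t ^ i / (Nat.factorial i : ℝ)),
      expPartialSum, expPartialSum, Finset.mul_sum, ← Finset.sum_add_distrib]
    refine Finset.sum_congr rfl fun i _ => ?_
    rw [neg_pow t i]
    ring
  rw [hFun, ← parity_sum, expNegRemainder]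
  ring

theorem hFun_zero (t : ℝ) : hFun 0 t = 2 - Real.exp (-t) := by
  simp only [hFun, Nat.zero_div, zero_add, pow_one, Finset.sum_range_one, mul_zero, Nat.sub_zero,
    pow_zero, Nat.factorial_zero, Nat.cast_one, div_one]
  ring

theorem hFun_one (t : ℝ) : hFun 1 t = Real.exp (-t) + 2 * t := by
  simp [hFun]

theorem hFun_apply_zero (m : ℕ) : hFun m 0 = 1 := by
  rw [hFun_eq_expPartialSum_add_expNegRemainder, expPartialSum_succ_apply_zero,
    expNegRemainder_succ_apply_zero, add_zero]

theorem one_le_hFun (m : ℕ) {t : ℝ} (ht : 0 ≤ t) : 1 ≤ hFun m t := by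
  rw [hFun_eq_expPartialSum_add_expNegRemainder]
  exact le_add_of_le_of_nonneg (one_le_expPartialSum_succ m ht) (expNegRemainder_nonneg (m + 1) ht)

theorem hasDerivAt_hFun (m : ℕ) (t : ℝ) :
    HasDerivAt (hFun m) (expPartialSum m t + expNegRemainder m t) t := by
  rw [funext (hFun_eq_expPartialSum_add_expNegRemainder m)]
  exact (hasDerivAt_expPartialSum_succ m t).add (hasDerivAt_expNegRemainder_succ m t)

theorem hasDerivAt_hFun_succ (m : ℕ) (t : ℝ) : HasDerivAt (hFun (m + 1)) (hFun m t) t :=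
  hFun_eq_expPartialSum_add_expNegRemainder m t ▸ hasDerivAt_hFun (m + 1) t

theorem continuous_hFun (m : ℕ) : Continuous (hFun m) :=
  continuous_iff_continuousAt.mpr fun t => (hasDerivAt_hFun m t).continuousAt

theorem strictMonoOn_hFun (m : ℕ) : StrictMonoOn (hFun m) (Set.Ici 0) :=
  strictMonoOn_of_hasDerivWithinAt_pos (convex_Ici 0) (continuous_hFun m).continuousOn
    (fun t _ => (hasDerivAt_hFun m t).hasDerivWithinAt)
    (fun _ ht => expPartialSum_add_expNegRemainder_pos m (interior_subset ht))

theorem convexOn_hFun_succ (m : ℕ) : ConvexOn ℝ (Set.Ici 0) (hFun (m + 1)) :=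
  convexOn_of_hasDerivWithinAt2_nonneg (convex_Ici 0) (continuous_hFun (m + 1)).continuousOn
    (fun t _ => (hasDerivAt_hFun_succ m t).hasDerivWithinAt)
    (fun t _ => (hasDerivAt_hFun m t).hasDerivWithinAt)
    (fun _ ht => (expPartialSum_add_expNegRemainder_pos m (interior_subset ht)).le)

theorem hFun_sub_sum_range_eq_expNegRemainder (m : ℕ) (t : ℝ) :
    hFun m t - ∑ i ∈ Finset.range (m + 1), t ^ i / (Nat.factorial i : ℝ) =
      expNegRemainder (m + 1) t :=
  sub_eq_of_eq_add' (hFun_eq_expPartialSum_add_expNegRemainder m t)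

/-- Lemma 8.1. Properties of the functions `h_m`. -/
theorem statement14 :
    (∀ m : ℕ, 1 ≤ m → ∀ t ∈ Set.Ici (0 : ℝ),
      HasDerivWithinAt (hFun m) (hFun (m - 1) t) (Set.Ici 0) t) ∧
    (∀ t : ℝ, 0 ≤ t → hFun 0 t = 2 - Real.exp (-t) ∧ 1 ≤ hFun 0 t ∧
      hFun 1 t = Real.exp (-t) + 2 * t ∧ 1 ≤ hFun 1 t) ∧
    (∀ m : ℕ, hFun m 0 = 1) ∧
    (∀ m : ℕ, StrictMonoOn (hFun m) (Set.Ici 0) ∧ ∀ t : ℝ, 0 ≤ t → 1 ≤ hFun m t) ∧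
    (∀ m : ℕ, 1 ≤ m → ConvexOn ℝ (Set.Ici 0) (hFun m)) ∧
    (∀ m : ℕ, ∀ t : ℝ, 0 ≤ t →
      0 ≤ hFun m t - ∑ i ∈ Finset.range (m + 1), t ^ i / (Nat.factorial i : ℝ) ∧
      hFun m t - ∑ i ∈ Finset.range (m + 1), t ^ i / (Nat.factorial i : ℝ) ≤
        t ^ m / (Nat.factorial m : ℝ)) := by
  refine ⟨fun m hm t _ => ?derivative,
    fun t ht => ⟨hFun_zero t, one_le_hFun 0 ht, hFun_one t, one_le_hFun 1 ht⟩,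
    hFun_apply_zero, fun m => ⟨strictMonoOn_hFun m, fun _ => one_le_hFun m⟩,
    fun m hm => ?convexity, fun m t ht => ?remainder⟩
  case derivative =>
    obtain ⟨m, rfl⟩ := Nat.exists_eq_add_of_le' hm
    exact (hasDerivAt_hFun_succ m t).hasDerivWithinAt
  case convexity =>
    obtain ⟨m, rfl⟩ := Nat.exists_eq_add_of_le' hm
    exact convexOn_hFun_succ m
  case remainder =>
    rw [hFun_sub_sum_range_eq_expNegRemainder]
    exact ⟨expNegRemainder_nonneg (m + 1) ht, expNegRemainder_succ_le m ht⟩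

end
end

section
/- For every d ∈ ℕ and every t ≥ 0, e^{−t} + Σ_{k=1}^{∞} [ 2·Σ_{i=0}^{d} binom(k−1,i) ]·(t^k/k!)·e^{−t} = h_d(t). Equivalently, if N(k) := 2·Σ_{i=0}^{d} binom(k−1,i) for k ≥ 1 (Schläfli's count of the cells generated by k great subspheres of S^d in general position) and N(0) := 1, then the expectation of N under a Poisson distribution with mean t equals h_d(t). -/
open Real MeasureTheory Filter
open scoped RealInnerProductSpace ENNReal NNReal Topology

noncomputable section

/-!
By Pascal's rule, `binom(k-1,i) + binom(k-1,i-1) = binom(k,i)`, so pairing the terms of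
`∑_{i ≤ d} binom(k-1,i)` from the top leaves `∑_{i ≤ ⌊d/2⌋} binom(k,d-2i)` for `k ≥ 1`. At `k = 0`
the latter sum is `1` or `0` according to the parity of `d`, whence
`N(k) = 2 ∑_{i ≤ ⌊d/2⌋} binom(k,d-2i) + (-1)^{d+1} [k = 0]` for all `k`. The Poisson expectation of
`binom(k,i)` is `t^i/i!` and that of the indicator `[k = 0]` is `e^{-t}`, so taking expectations
term by term gives `h_d(t)`.
-/

/-- Schläfli's number `N(k)` of cells generated by `k` great subspheres of `S^d` in general
position, with the convention `N(0) = 1`. The positive case is indexed by `k - 1`, so that no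
truncated subtraction occurs. -/
def schlafliCount (d : ℕ) : ℕ → ℕ
  | 0 => 1
  | n + 1 => 2 * ∑ i ∈ Finset.range (d + 1), n.choose i

theorem sum_range_half_add_two {M : Type*} [AddCommMonoid M] (f : ℕ → M) (d : ℕ) :
    ∑ i ∈ Finset.range ((d + 2) / 2 + 1), f (d + 2 - 2 * i) =
      ∑ i ∈ Finset.range (d / 2 + 1), f (d - 2 * i) + f (d + 2) := by
  have hdiv : (d + 2) / 2 = d / 2 + 1 := by lia
  have hsub (i : ℕ) : d + 2 - 2 * (i + 1) = d - 2 * i := by lia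
  simp only [hdiv, Finset.sum_range_succ' _ (d / 2 + 1), hsub, Nat.mul_zero, Nat.sub_zero]

theorem sum_range_choose_eq_sum_range_half (n d : ℕ) :
    ∑ i ∈ Finset.range (d + 1), n.choose i =
      ∑ i ∈ Finset.range (d / 2 + 1), (n + 1).choose (d - 2 * i) := by
  induction d using Nat.twoStepInduction with
  | zero => simp
  | one => simp [Finset.sum_range_succ, add_comm]
  | more d ih _ =>
    rw [sum_range_half_add_two, Finset.sum_range_succ, Finset.sum_range_succ, ih,
      Nat.choose_succ_succ' n (d + 1), add_assoc]

theorem sum_range_half_choose_zero (d : ℕ) :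
    ∑ i ∈ Finset.range (d / 2 + 1), Nat.choose 0 (d - 2 * i) = if Even d then 1 else 0 := by
  induction d using Nat.twoStepInduction with
  | zero => simp
  | one => simp
  | more d ih _ =>
    rw [sum_range_half_add_two (Nat.choose 0), ih]
    simp [Nat.even_add]

theorem cast_schlafliCount {R : Type*} [Ring R] (d k : ℕ) :
    (schlafliCount d k : R) =
      (if k = 0 then (-1) ^ (d + 1) else 0) +
        2 * ∑ i ∈ Finset.range (d / 2 + 1), (k.choose (d - 2 * i) : R) := by
  rw [← Nat.cast_sum]
  rcases k with _ | n
  · rw [sum_range_half_choose_zero]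
    rcases Nat.even_or_odd d with hd | hd
    · rw [if_pos rfl, if_pos hd, hd.add_one.neg_one_pow]
      norm_num [schlafliCount]
    · rw [if_pos rfl, if_neg (Nat.not_even_iff_odd.mpr hd), hd.add_one.neg_one_pow]
      simp [schlafliCount]
  · simp [schlafliCount, sum_range_choose_eq_sum_range_half]

theorem add_choose_mul_pow_div_factorial {K : Type*} [Field K] [CharZero K] (x : K) (i j : ℕ) :
    ((j + i).choose i : K) * (x ^ (j + i) / ((j + i).factorial : K)) =
      x ^ i / (i.factorial : K) * (x ^ j / (j.factorial : K)) := by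
  have hfactorial := Nat.cast_ne_zero (R := K).mpr (j + i).factorial_ne_zero
  rw [add_comm j i] at hfactorial ⊢
  rw [Nat.cast_add_choose]
  field_simp
  ring

theorem hasSum_choose_mul_pow_div_factorial {K : Type*} [NormedField K] [NormedAlgebra ℚ K]
    [CompleteSpace K] (i : ℕ) (x : K) :
    HasSum (fun k : ℕ => (k.choose i : K) * (x ^ k / (k.factorial : K)))
      (x ^ i / (i.factorial : K) * NormedSpace.exp x) := by
  have : CharZero K := algebraRat.charZero K
  have hshift := (NormedSpace.expSeries_div_hasSum_exp x).mul_left (x ^ i / (i.factorial : K))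
  refine ((add_left_injective i).hasSum_iff fun k hk => ?_).mp
    (hshift.congr_fun fun j => add_choose_mul_pow_div_factorial x i j)
  have hki : k < i := by
    by_contra! hik
    exact hk ⟨k - i, Nat.sub_add_cancel hik⟩
  rw [Nat.choose_eq_zero_of_lt hki, Nat.cast_zero, zero_mul]

theorem hasSum_choose_mul_poisson (i : ℕ) (t : ℝ) :
    HasSum (fun k : ℕ => (k.choose i : ℝ) * (t ^ k / (k.factorial : ℝ)) * Real.exp (-t))
      (t ^ i / (i.factorial : ℝ)) := by
  have h := (hasSum_choose_mul_pow_div_factorial i t).mul_right (Real.exp (-t))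
  rwa [← Real.exp_eq_exp_ℝ, mul_assoc, ← Real.exp_add, add_neg_cancel, Real.exp_zero,
    mul_one] at h

theorem hasSum_schlafliCount_mul_poisson (d : ℕ) (t : ℝ) :
    HasSum (fun k : ℕ =>
        (schlafliCount d k : ℝ) * (t ^ k / (k.factorial : ℝ)) * Real.exp (-t)) (hFun d t) := by
  have hzero := hasSum_ite_eq (0 : ℕ) ((-1 : ℝ) ^ (d + 1) * Real.exp (-t))
  have hchoose := (hasSum_sum fun i (_ : i ∈ Finset.range (d / 2 + 1)) =>
    hasSum_choose_mul_poisson (d - 2 * i) t).mul_left 2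
  refine (hzero.add hchoose).congr_fun fun k => ?_
  rw [cast_schlafliCount, ← Finset.sum_mul, ← Finset.sum_mul]
  split_ifs with hk
  · subst hk
    simp only [pow_zero, Nat.factorial_zero, Nat.cast_one, div_one]
    ring
  · ring

theorem statement15_general (d : ℕ) (t : ℝ) :
    HasSum (fun j : ℕ => (2 * ∑ i ∈ Finset.range (d + 1), (j.choose i : ℝ)) *
        (t ^ (j + 1) / ((j + 1).factorial : ℝ)) * Real.exp (-t)) (hFun d t - Real.exp (-t)) ∧
    HasSum (fun k : ℕ => (if k = 0 then (1 : ℝ) else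
        2 * ∑ i ∈ Finset.range (d + 1), ((k - 1).choose i : ℝ)) *
        (t ^ k / (k.factorial : ℝ)) * Real.exp (-t)) (hFun d t) := by
  have h := hasSum_schlafliCount_mul_poisson d t
  constructor
  · simpa [schlafliCount] using (hasSum_nat_add_iff' 1).mpr h
  · refine h.congr_fun fun k => ?_
    cases k <;> simp [schlafliCount]

/-- intensity of the cell process; Schläfli. For every `d` and
`t ≥ 0`, the Poisson expectation of Schläfli's cell count
`N(0) = 1`, `N(k) = 2 ∑_{i=0}^d binom(k-1,i)` equals `h_d(t)`:
`e^{-t} + ∑_{k≥1} N(k) (t^k/k!) e^{-t} = h_d(t)`. -/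
theorem statement15 (d : ℕ) (t : ℝ) (ht : 0 ≤ t) :
    (Real.exp (-t) + ∑' j : ℕ,
        (2 * ∑ i ∈ Finset.range (d + 1), (j.choose i : ℝ)) *
          (t ^ (j + 1) / (Nat.factorial (j + 1) : ℝ)) * Real.exp (-t) = hFun d t) ∧
    (∑' k : ℕ,
        (if k = 0 then (1 : ℝ) else
          2 * ∑ i ∈ Finset.range (d + 1), ((k - 1).choose i : ℝ)) *
          (t ^ k / (Nat.factorial k : ℝ)) * Real.exp (-t) = hFun d t) := by
  obtain ⟨hpositive, hall⟩ := statement15_general d t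
  exact ⟨by rw [hpositive.tsum_eq, add_sub_cancel], hall.tsum_eq⟩

end
end

section
/- Let a ∈ (0,π/2) and ε ∈ (0,1] with a + ε ≤ π/2. Then sin(ε/2)·(sin(a)/sin(a+ε/2))·(sin(a+ε) + sin(a))^{−1/2}·(sin(a+ε) − sin(a))^{−1/2} ≥ √2·π^{−2}·a·√ε. Consequently, the angle ω ∈ (0,π/2) with tan(ω) equal to the left-hand side satisfies ω ≥ π^{−2}·a·√ε. -/
open Real MeasureTheory Filter
open scoped RealInnerProductSpace ENNReal NNReal Topology

noncomputable section

/-!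
Jordan's inequality `2 / π * x ≤ sin x` bounds the sines in the numerator of `tan ω` from below,
while `sin ≤ 1` and the Lipschitz continuity of `sin` bound the two square roots in the denominator
from above by `√2` and `√ε`. This gives `√2 * x ≤ tan ω` with `x = π⁻² * a * √ε ≤ π / 4`. On
`[0, π / 4]` the tangent is at most `1 / cos (π / 4) = √2` times its argument, so `ω < x` is
impossible.
-/

/-- The tangent of the angular radius `ω` of the set of directions in which the spherical convex
hull of the cap `B(e, a)` and a point at distance `a + ε` from `e` extends beyond the cap by at
least `ε / 2`, written as the explicit trigonometric expression it evaluates to. -/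
def tanOverhangRadius (a ε : ℝ) : ℝ :=
  sin (ε / 2) * (sin a / sin (a + ε / 2)) * (√(sin (a + ε) + sin a))⁻¹ *
    (√(sin (a + ε) - sin a))⁻¹

theorem two_div_pi_mul_le_sin_div_sin {x y : ℝ} (hx : 0 ≤ x) (hx' : x ≤ π / 2)
    (hy : 0 < sin y) : 2 / π * x ≤ sin x / sin y :=
  have hsin : 2 / π * x ≤ sin x := mul_le_sin hx hx'
  have hsin_nonneg : 0 ≤ sin x := le_trans (by positivity) hsin
  hsin.trans (le_div_self hsin_nonneg hy (sin_le_one y))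

theorem sqrt_sin_add_sin_mul_sqrt_sin_sub_sin_le (x y : ℝ) :
    √(sin x + sin y) * √(sin x - sin y) ≤ √2 * √|x - y| := by
  have hadd : sin x + sin y ≤ 2 := by linarith [sin_le_one x, sin_le_one y]
  have hsub : sin x - sin y ≤ |x - y| := (le_abs_self _).trans (abs_sin_sub_sin_le x y)
  gcongr

theorem sqrt_two_mul_le_tanOverhangRadius {a ε : ℝ} (ha : 0 ≤ a) (hε : 0 < ε)
    (h : a + ε ≤ π / 2) :
    √2 * (π ^ 2)⁻¹ * a * √ε ≤ tanOverhangRadius a ε := by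
  have hhalf : 2 / π * (ε / 2) ≤ sin (ε / 2) := mul_le_sin (by linarith) (by linarith)
  have hquot : 2 / π * a ≤ sin a / sin (a + ε / 2) :=
    two_div_pi_mul_le_sin_div_sin ha (by linarith)
      (sin_pos_of_pos_of_lt_pi (by linarith) (by linarith))
  have hsqrt : √(sin (a + ε) + sin a) * √(sin (a + ε) - sin a) ≤ √2 * √ε := by
    simpa only [add_sub_cancel_left, abs_of_pos hε] using
      sqrt_sin_add_sin_mul_sqrt_sin_sub_sin_le (a + ε) a
  have hsqrt_pos : 0 < √(sin (a + ε) + sin a) * √(sin (a + ε) - sin a) := by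
    have hsin_nonneg : 0 ≤ sin a := sin_nonneg_of_nonneg_of_le_pi ha (by linarith)
    have hsin_lt : sin a < sin (a + ε) :=
      sin_lt_sin_of_lt_of_le_pi_div_two (by linarith) h (by linarith)
    exact mul_pos (sqrt_pos.2 (by linarith)) (sqrt_pos.2 (by linarith))
  calc √2 * (π ^ 2)⁻¹ * a * √ε
      = 2 / π * (ε / 2) * (2 / π * a) * (√2 * √ε)⁻¹ := by
        field_simp
        rw [sq_sqrt zero_le_two, sq_sqrt hε.le, mul_comm 2 a]
    _ ≤ sin (ε / 2) * (sin a / sin (a + ε / 2)) *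
          (√(sin (a + ε) + sin a) * √(sin (a + ε) - sin a))⁻¹ := by
        have hhalf_nonneg : 0 ≤ sin (ε / 2) := le_trans (by positivity) hhalf
        have hquot_nonneg : 0 ≤ sin a / sin (a + ε / 2) := le_trans (by positivity) hquot
        gcongr
    _ = tanOverhangRadius a ε := by rw [tanOverhangRadius, mul_inv, ← mul_assoc]

theorem tan_le_div_cos_of_le {x y : ℝ} (hx : 0 ≤ x) (hxy : x ≤ y) (hy : y < π / 2) :
    tan x ≤ x / cos y := by
  have hcos_pos : 0 < cos y := cos_pos_of_mem_Ioo ⟨by linarith, hy⟩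
  have hcos_le : cos y ≤ cos x := cos_le_cos_of_nonneg_of_le_pi hx (by linarith) hxy
  rw [tan_eq_sin_div_cos]
  exact div_le_div₀ hx (sin_le hx) hcos_pos hcos_le

theorem tan_le_sqrt_two_mul {x : ℝ} (hx : 0 ≤ x) (hx' : x ≤ π / 4) : tan x ≤ √2 * x :=
  calc tan x ≤ x / cos (π / 4) := tan_le_div_cos_of_le hx hx' (by linarith [pi_pos])
    _ = √2 * x := by
      rw [cos_pi_div_four]
      field_simp
      rw [sq_sqrt zero_le_two, mul_comm]

theorem le_of_sqrt_two_mul_le_tan {x ω : ℝ} (hω : 0 ≤ ω) (hx : x ≤ π / 4)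
    (h : √2 * x ≤ tan ω) : x ≤ ω := by
  by_contra! hlt
  have htan : tan ω ≤ √2 * ω := tan_le_sqrt_two_mul hω (hlt.le.trans hx)
  exact hlt.not_ge (le_of_mul_le_mul_left (h.trans htan) (by positivity))

theorem inv_pi_sq_mul_mul_sqrt_le_pi_div_four {a ε : ℝ} (ha : a ≤ π / 2) (hε : ε ≤ 4) :
    (π ^ 2)⁻¹ * a * √ε ≤ π / 4 := by
  have hsqrt : √ε ≤ 2 := sqrt_le_iff.2 ⟨zero_le_two, by linarith⟩
  calc (π ^ 2)⁻¹ * a * √ε ≤ (π ^ 2)⁻¹ * (π / 2) * 2 := by gcongr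
    _ = 1 / π := by field_simp
    _ ≤ π / 4 := by
      rw [div_le_div_iff₀ pi_pos four_pos]
      nlinarith [pi_gt_three]

theorem statement16_general {a ε : ℝ} (ha : 0 ≤ a) (hε : 0 < ε) (h : a + ε ≤ π / 2) :
    √2 * (π ^ 2)⁻¹ * a * √ε ≤ tanOverhangRadius a ε ∧
      ∀ ω : ℝ, 0 ≤ ω → tan ω = tanOverhangRadius a ε → (π ^ 2)⁻¹ * a * √ε ≤ ω := by
  have hbound := sqrt_two_mul_le_tanOverhangRadius ha hε h
  refine ⟨hbound, fun ω hω htan => le_of_sqrt_two_mul_le_tan hω ?_ ?_⟩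
  · exact inv_pi_sq_mul_mul_sqrt_le_pi_div_four (by linarith) (by linarith [pi_le_four])
  · rw [htan]
    simpa only [mul_assoc] using hbound

/-- spherical trigonometry estimate in the proof of Theorem 4.4. -/
theorem statement16 (a ε : ℝ) (ha : 0 < a) (ha' : a < π / 2) (hε : 0 < ε) (hε' : ε ≤ 1)
    (h : a + ε ≤ π / 2) :
    Real.sin (ε / 2) * (Real.sin a / Real.sin (a + ε / 2)) *
        (Real.sqrt (Real.sin (a + ε) + Real.sin a))⁻¹ *
        (Real.sqrt (Real.sin (a + ε) - Real.sin a))⁻¹ ≥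
      Real.sqrt 2 * (π ^ 2)⁻¹ * a * Real.sqrt ε ∧
    ∀ ω : ℝ, 0 < ω → ω < π / 2 →
      Real.tan ω = Real.sin (ε / 2) * (Real.sin a / Real.sin (a + ε / 2)) *
        (Real.sqrt (Real.sin (a + ε) + Real.sin a))⁻¹ *
        (Real.sqrt (Real.sin (a + ε) - Real.sin a))⁻¹ →
      (π ^ 2)⁻¹ * a * Real.sqrt ε ≤ ω :=
  have hgeneral := statement16_general ha.le hε h
  ⟨hgeneral.1, fun _ hω _ => hgeneral.2 _ hω.le⟩

end
end

section
/- Let d ≥ 2, a ∈ (0,π/2) and ε ∈ (0,1] with ε ≤ π/2 − a. Then ∫_a^{a+ε/2} cos^{d−1}(t) dt ≥ (3^{d−1}/(2·π^{2d−2}))·ε·(π/2 − a)^{d−1}. -/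
open Real MeasureTheory Filter
open scoped RealInnerProductSpace ENNReal NNReal Topology

noncomputable section

lemma sub_mul_cos_pow_le_integral_cos_pow {a b : ℝ} (ha : 0 ≤ a) (hab : a ≤ b) (hb : b ≤ π / 2)
    (n : ℕ) : (b - a) * Real.cos b ^ n ≤ ∫ t in a..b, Real.cos t ^ n := by
  have hcos : ∀ t ∈ Set.Icc a b, Real.cos b ^ n ≤ Real.cos t ^ n := fun t ht ↦
    pow_le_pow_left₀ (cos_nonneg_of_neg_pi_div_two_le_of_le (by linarith) hb)
      (cos_le_cos_of_nonneg_of_le_pi (ha.trans ht.1) (by linarith) ht.2) n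
  calc (b - a) * Real.cos b ^ n = ∫ _ in a..b, Real.cos b ^ n := by
        rw [intervalIntegral.integral_const, smul_eq_mul]
    _ ≤ ∫ t in a..b, Real.cos t ^ n :=
        intervalIntegral.integral_mono_on hab intervalIntegrable_const
          ((Real.continuous_cos.pow n).intervalIntegrable a b) hcos

lemma pi_div_two_sub_div_pi_le_cos {a t : ℝ} (ha : a ≤ π / 2) (ht₀ : 0 ≤ t)
    (ht : t ≤ (a + π / 2) / 2) : (π / 2 - a) / π ≤ Real.cos t :=
  calc (π / 2 - a) / π = 1 - 2 / π * ((a + π / 2) / 2) := by field_simp; ring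
    _ ≤ 1 - 2 / π * t := by gcongr
    _ ≤ Real.cos t := one_sub_mul_le_cos ht₀ (by linarith)

lemma three_pow_div_two_mul_pi_pow_le (n : ℕ) : 3 ^ n / (2 * π ^ (2 * n)) ≤ 1 / (2 * π ^ n) :=
  calc 3 ^ n / (2 * π ^ (2 * n)) ≤ π ^ n / (2 * π ^ (2 * n)) := by
        gcongr
        exact pi_gt_three.le
    _ = 1 / (2 * π ^ n) := by
        rw [two_mul n, pow_add]
        field_simp

theorem statement17_general {a ε : ℝ} (ha : 0 ≤ a) (hε : 0 ≤ ε) (h : ε ≤ π / 2 - a) (n : ℕ) :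
    1 / (2 * π ^ n) * ε * (π / 2 - a) ^ n ≤ ∫ t in a..(a + ε / 2), Real.cos t ^ n := by
  have hbase : 0 ≤ (π / 2 - a) / π := div_nonneg (hε.trans h) pi_nonneg
  have hcos : (π / 2 - a) / π ≤ Real.cos (a + ε / 2) :=
    pi_div_two_sub_div_pi_le_cos (by linarith) (by linarith) (by linarith)
  calc 1 / (2 * π ^ n) * ε * (π / 2 - a) ^ n
      = (a + ε / 2 - a) * ((π / 2 - a) / π) ^ n := by
        rw [div_pow]
        field_simp
        ring
    _ ≤ (a + ε / 2 - a) * Real.cos (a + ε / 2) ^ n :=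
        mul_le_mul_of_nonneg_left (pow_le_pow_left₀ hbase hcos n) (by linarith)
    _ ≤ ∫ t in a..(a + ε / 2), Real.cos t ^ n :=
        sub_mul_cos_pow_le_integral_cos_pow ha (by linarith) (by linarith) n

/-- integral estimate in the proof of Theorem 4.4. -/
theorem statement17 (d : ℕ) (hd : 2 ≤ d) (a ε : ℝ) (ha : 0 < a) (ha' : a < π / 2)
    (hε : 0 < ε) (hε' : ε ≤ 1) (h : ε ≤ π / 2 - a) :
    (∫ t in a..(a + ε / 2), Real.cos t ^ (d - 1)) ≥
      (3 ^ (d - 1) / (2 * π ^ (2 * d - 2))) * ε * (π / 2 - a) ^ (d - 1) := by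
  refine le_trans ?_ (statement17_general ha.le hε.le h (d - 1))
  have : 0 < π / 2 - a := sub_pos.2 ha'
  gcongr ?_ * ε * _
  simpa only [Nat.mul_sub] using three_pow_div_two_mul_pi_pow_le (d - 1)

end
end
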